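/- Let f : (0,∞)^d → ℝ be twice continuously differentiable with bounded second partial derivatives, and let ξ_1,…,ξ_d be independent, with ξ_j gamma distributed with shape x_j/b_j and scale b_j (x_j > 0). Then E[f(ξ_1,…,ξ_d)] = f(x_1,…,x_d) + (1/2)∑_{j=1}^d x_j b_j ∂²f/∂x_j²(x_1,…,x_d) + o(∑_j b_j) as max_j b_j → 0. -/

import Mathlib

open Real MeasureTheory Filter Finset

/-- The gamma kernel (gamma density with shape `x/b`, scale `b`). -/
noncomputable def gammaKernel (x b t : ℝ) : ℝ :=
  t ^ (x / b - 1) * Real.exp (-t / b) / (b ^ (x / b) * Real.Gamma (x / b))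

/-- Second partial derivative `∂²f/∂x_j²` at the point `y`. -/
noncomputable def partial2 {d : ℕ} (f : (Fin d → ℝ) → ℝ) (y : Fin d → ℝ) (j : Fin d) : ℝ :=
  deriv (deriv (fun u => f (Function.update y j u))) (y j)


/-- The gamma density on the whole line. -/
noncomputable def gk (x b : ℝ) : ℝ → ℝ := Set.indicator (Set.Ioi 0) (gammaKernel x b)

/-- The gamma law. -/
noncomputable def gm (x b : ℝ) : Measure ℝ :=
  volume.withDensity (fun t => ENNReal.ofReal (gk x b t))

lemma gk_nonneg {x b : ℝ} (hx : 0 < x) (hb : 0 < b) (t : ℝ) : 0 ≤ gk x b t := by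
  unfold gk
  apply Set.indicator_nonneg
  intro t ht
  have ht' : (0:ℝ) < t := ht
  have := Real.Gamma_pos_of_pos (div_pos hx hb)
  unfold gammaKernel
  positivity

lemma gk_measurable (x b : ℝ) : Measurable (gk x b) := by
  unfold gk
  apply Measurable.indicator _ measurableSet_Ioi
  unfold gammaKernel
  fun_prop

lemma gamma_add_nat {a : ℝ} (ha : 0 < a) (n : ℕ) :
    Real.Gamma (a + n) = Real.Gamma a * ∏ i ∈ range n, (a + i) := by
  induction n with
  | zero => simp
  | succ k ih =>
    rw [Finset.prod_range_succ]
    have : a + ((k + 1 : ℕ) : ℝ) = (a + k) + 1 := by push_cast; ring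
    rw [this, Real.Gamma_add_one (by positivity), ih]
    ring

lemma gk_moment {x b : ℝ} (hx : 0 < x) (hb : 0 < b) (n : ℕ) :
    ∫ t, gk x b t * t ^ n = ∏ i ∈ range n, (x + i * b) := by
  have ha := div_pos hx hb
  have hG := Real.Gamma_pos_of_pos ha
  have h1 : (fun t => gk x b t * t ^ n) =
      Set.indicator (Set.Ioi 0) (fun t => gammaKernel x b t * t ^ n) := by
    funext t
    unfold gk
    by_cases ht : t ∈ Set.Ioi (0:ℝ) <;> simp [Set.indicator, ht]
  rw [h1, integral_indicator measurableSet_Ioi]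
  have h2 : ∀ t ∈ Set.Ioi (0:ℝ), gammaKernel x b t * t ^ n =
      (1 / (b ^ (x / b) * Real.Gamma (x / b))) *
        (t ^ ((x / b + n) - 1) * Real.exp (-((1 / b) * t))) := by
    intro t ht
    have ht' : (0:ℝ) < t := ht
    unfold gammaKernel
    have e1 : x / b + n - 1 = (x / b - 1) + n := by ring
    have e2 : -t / b = -((1 / b) * t) := by ring
    rw [e1, Real.rpow_add ht', Real.rpow_natCast, e2]
    ring
  rw [setIntegral_congr_fun measurableSet_Ioi h2, integral_const_mul,
    Real.integral_rpow_mul_exp_neg_mul_Ioi (by positivity) (by positivity), gamma_add_nat ha,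
    one_div_one_div, Real.rpow_add hb, Real.rpow_natCast]
  have h3 : ∏ i ∈ range n, (x + i * b) = b ^ n * ∏ i ∈ range n, (x / b + i) := by
    have e : b ^ n = ∏ i ∈ range n, b := by simp
    rw [e, ← Finset.prod_mul_distrib]
    apply Finset.prod_congr rfl
    intro i _
    field_simp
  rw [h3]
  have : b ^ (x / b) ≠ 0 := (Real.rpow_pos_of_pos hb _).ne'
  field_simp

lemma gk_int {x b : ℝ} (hx : 0 < x) (hb : 0 < b) (n : ℕ) :
    Integrable (fun t => gk x b t * t ^ n) := by
  apply Integrable.of_integral_ne_zero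
  rw [gk_moment hx hb]
  apply ne_of_gt
  apply Finset.prod_pos
  intro i _
  positivity

lemma gm_integral {x b : ℝ} (hx : 0 < x) (hb : 0 < b) (g : ℝ → ℝ) :
    ∫ t, g t ∂(gm x b) = ∫ t, gk x b t * g t := by
  unfold gm
  rw [integral_withDensity_eq_integral_toReal_smul
    (gk_measurable x b).ennreal_ofReal (by simp)]
  simp [ENNReal.toReal_ofReal (gk_nonneg hx hb _)]

lemma gm_integrable {x b : ℝ} (hx : 0 < x) (hb : 0 < b) (g : ℝ → ℝ) :
    Integrable g (gm x b) ↔ Integrable (fun t => gk x b t * g t) := by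
  unfold gm
  rw [integrable_withDensity_iff_integrable_smul' (gk_measurable x b).ennreal_ofReal (by simp)]
  simp [ENNReal.toReal_ofReal (gk_nonneg hx hb _)]

/-- What we need to know about the one-dimensional laws. -/
structure Nice (ν : Measure ℝ) (x b K : ℝ) : Prop where
  prob : IsProbabilityMeasure ν
  pos : ∀ᵐ t ∂ν, 0 < t
  mom : ∀ n : ℕ, Integrable (fun t : ℝ => t ^ n) ν
  mean : ∫ t, (t - x) ∂ν = 0
  var : ∫ t, (t - x) ^ 2 ∂ν = x * b
  four : ∫ t, (t - x) ^ 4 ∂ν ≤ K * b ^ 2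

lemma gm_prob {x b : ℝ} (hx : 0 < x) (hb : 0 < b) : IsProbabilityMeasure (gm x b) := by
  constructor
  have h0 := gk_moment hx hb 0
  have hi := gk_int hx hb 0
  simp only [pow_zero, mul_one, range_zero, prod_empty] at h0 hi
  unfold gm
  rw [withDensity_apply _ MeasurableSet.univ, Measure.restrict_univ,
    ← ofReal_integral_eq_lintegral_ofReal hi (ae_of_all _ (gk_nonneg hx hb)), h0]
  simp

lemma gm_nice {x b : ℝ} (hx : 0 < x) (hb : 0 < b) (hb1 : b < 1) :
    Nice (gm x b) x b (3 * x ^ 2 + 6 * x) := by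
  have hp := gm_prob hx hb
  have hm : ∀ n : ℕ, Integrable (fun t : ℝ => t ^ n) (gm x b) := fun n =>
    (gm_integrable hx hb _).2 (gk_int hx hb n)
  have hM : ∀ n : ℕ, ∫ t, t ^ n ∂(gm x b) = ∏ i ∈ range n, (x + i * b) := fun n => by
    rw [gm_integral hx hb, gk_moment hx hb]
  have m1 : ∫ t, t ∂(gm x b) = x := by simpa using hM 1
  have i1 : Integrable (fun t : ℝ => t) (gm x b) := by simpa using hm 1
  have m2 := hM 2
  have m3 := hM 3
  have m4 := hM 4
  simp only [prod_range_succ, range_zero, prod_empty] at m2 m3 m4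
  push_cast at m2 m3 m4
  refine ⟨hp, ?_, hm, ?_, ?_, ?_⟩
  · unfold gm
    rw [ae_withDensity_iff (gk_measurable x b).ennreal_ofReal]
    refine ae_of_all _ fun t ht => ?_
    by_contra h
    apply ht
    simp [gk, Set.indicator, h]
  · rw [integral_sub i1 (integrable_const _), m1]; simp
  · have : (fun t : ℝ => (t - x) ^ 2) = fun t => t ^ 2 + ((-2 * x) * t + x ^ 2) := by
      funext t; ring
    have j0 : Integrable (fun t : ℝ => (-2 * x) * t + x ^ 2) (gm x b) :=
      (i1.const_mul _).add (integrable_const _)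
    rw [this, integral_add (hm 2) j0,
      integral_add (i1.const_mul _) (integrable_const _), integral_const_mul, m1, m2]
    simp; ring
  · have : (fun t : ℝ => (t - x) ^ 4) = fun t => t ^ 4 + ((-4 * x) * t ^ 3 +
        ((6 * x ^ 2) * t ^ 2 + ((-4 * x ^ 3) * t + x ^ 4))) := by
      funext t; ring
    have j2 := (hm 2).const_mul (6 * x ^ 2)
    have j3 := (hm 3).const_mul (-4 * x)
    have j0 : Integrable (fun t : ℝ => (-4 * x ^ 3) * t + x ^ 4) (gm x b)  :=
      (i1.const_mul _).add (integrable_const _)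
    have j4 : Integrable (fun t : ℝ => (6 * x ^ 2) * t ^ 2 + ((-4 * x ^ 3) * t + x ^ 4)) (gm x b) :=
      j2.add j0
    have j5 : Integrable (fun t : ℝ => (-4 * x) * t ^ 3 +
        ((6 * x ^ 2) * t ^ 2 + ((-4 * x ^ 3) * t + x ^ 4))) (gm x b) := j3.add j4
    rw [this, integral_add (hm 4) j5, integral_add j3 j4,
      integral_add j2 j0, integral_add (i1.const_mul _) (integrable_const _),
      integral_const_mul, integral_const_mul, integral_const_mul, m1, m2, m3, m4]
    simp only [integral_const, probReal_univ, one_smul]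
    have : 0 ≤ x * b ^ 2 * (1 - b) := by
      have : 0 ≤ 1 - b := by linarith
      positivity
    nlinarith [this]

lemma pi_gm {d : ℕ} (x b : Fin d → ℝ) (hx : ∀ j, 0 < x j) (hb : ∀ j, 0 < b j)
    (f : (Fin d → ℝ) → ℝ) :
    ∫ t : Fin d → ℝ, f t * ∏ j, gk (x j) (b j) (t j) =
      ∫ t, f t ∂(Measure.pi fun j => gm (x j) (b j)) := by
  have hp : ∀ j, IsProbabilityMeasure (gm (x j) (b j)) := fun j => gm_prob (hx j) (hb j)
  have hmeas : Measurable fun t : Fin d → ℝ => ∏ j, ENNReal.ofReal (gk (x j) (b j) (t j)) :=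
    Finset.measurable_prod _ fun j _ =>
      ((gk_measurable (x j) (b j)).comp (measurable_pi_apply j)).ennreal_ofReal
  have key : (Measure.pi fun j => gm (x j) (b j)) =
      (volume : Measure (Fin d → ℝ)).withDensity
        (fun t => ∏ j, ENNReal.ofReal (gk (x j) (b j) (t j))) := by
    apply Measure.pi_eq
    intro s hs
    have hi : ∀ j, Integrable (gk (x j) (b j)) := fun j => by
      simpa using gk_int (hx j) (hb j) 0
    have e1 : ∀ t : Fin d → ℝ, ∏ j, ENNReal.ofReal (gk (x j) (b j) (t j)) =
        ENNReal.ofReal (∏ j, gk (x j) (b j) (t j)) := fun t =>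
      (ENNReal.ofReal_prod_of_nonneg fun j _ => gk_nonneg (hx j) (hb j) _).symm
    have e2 : ∀ j, gm (x j) (b j) (s j) =
        ENNReal.ofReal (∫ t in s j, gk (x j) (b j) t) := fun j => by
      unfold gm
      rw [withDensity_apply _ (hs j), ofReal_integral_eq_lintegral_ofReal (hi j).integrableOn
        (ae_of_all _ (gk_nonneg (hx j) (hb j)))]
    rw [withDensity_apply _ (MeasurableSet.univ_pi hs), volume_pi, Measure.restrict_pi_pi]
    simp_rw [e1, e2]
    rw [← ofReal_integral_eq_lintegral_ofReal
      (Integrable.fintype_prod fun j => (hi j).integrableOn)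
      (ae_of_all _ fun t => Finset.prod_nonneg fun j _ => gk_nonneg (hx j) (hb j) _),
      integral_fintype_prod_eq_prod, ENNReal.ofReal_prod_of_nonneg]
    intro j _
    exact integral_nonneg (gk_nonneg (hx j) (hb j))
  rw [key, integral_withDensity_eq_integral_toReal_smul hmeas]
  · congr 1
    funext t
    rw [ENNReal.toReal_prod, smul_eq_mul, mul_comm]
    congr 1
    exact Finset.prod_congr rfl fun j _ => (ENNReal.toReal_ofReal (gk_nonneg (hx j) (hb j) _)).symm
  · exact ae_of_all _ fun t => ENNReal.prod_lt_top fun j _ => ENNReal.ofReal_lt_top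

/-- The open orthant. -/
def Orth (d : ℕ) : Set (Fin d → ℝ) := Set.univ.pi fun _ => Set.Ioi 0

lemma mem_Orth {d : ℕ} {y : Fin d → ℝ} : y ∈ Orth d ↔ ∀ i, 0 < y i := by
  simp [Orth]

lemma isOpen_Orth (d : ℕ) : IsOpen (Orth d) :=
  isOpen_set_pi Set.finite_univ fun _ _ => isOpen_Ioi

lemma update_mem {d : ℕ} {y : Fin d → ℝ} (hy : y ∈ Orth d) (j : Fin d) {u : ℝ} (hu : 0 < u) :
    Function.update y j u ∈ Orth d := by
  rw [mem_Orth] at *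
  intro i
  by_cases h : i = j
  · subst h; simpa using hu
  · simpa [Function.update, h] using hy i

lemma piecewise_mem {d : ℕ} {y t : Fin d → ℝ} (hy : y ∈ Orth d) (ht : t ∈ Orth d)
    (s : Finset (Fin d)) : s.piecewise t y ∈ Orth d := by
  rw [mem_Orth] at *
  intro i
  by_cases h : i ∈ s
  · simpa [h] using ht i
  · simpa [h] using hy i

/-- Partial derivative via the Fréchet derivative. -/
noncomputable def Pd {d : ℕ} (F : (Fin d → ℝ) → ℝ) (j : Fin d) (y : Fin d → ℝ) : ℝ :=
  fderiv ℝ F y (Pi.single j 1)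

lemma Pd_hasDerivAt {d : ℕ} {F : (Fin d → ℝ) → ℝ} (hF : DifferentiableOn ℝ F (Orth d))
    {y : Fin d → ℝ} (hy : y ∈ Orth d) (j : Fin d) {u : ℝ} (hu : 0 < u) :
    HasDerivAt (fun v => F (Function.update y j v)) (Pd F j (Function.update y j u)) u := by
  have hm := update_mem hy j hu
  have h1 := (hF.differentiableAt ((isOpen_Orth d).mem_nhds hm)).hasFDerivAt
  exact h1.comp_hasDerivAt u (hasDerivAt_update y j u)

lemma Pd_contDiffOn {d : ℕ} {f : (Fin d → ℝ) → ℝ} (hf : ContDiffOn ℝ 2 f (Orth d)) (j : Fin d) :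
    ContDiffOn ℝ 1 (Pd f j) (Orth d) := by
  have h := hf.fderiv_of_isOpen (m := 1) (isOpen_Orth d) (by norm_num)
  exact h.clm_apply contDiffOn_const

lemma Pd_continuousOn {d : ℕ} {F : (Fin d → ℝ) → ℝ} (hf : ContDiffOn ℝ 1 F (Orth d)) (j : Fin d) :
    ContinuousOn (Pd F j) (Orth d) := by
  have h := hf.continuousOn_fderiv_of_isOpen (isOpen_Orth d) le_rfl
  exact h.clm_apply continuousOn_const

lemma partial2_eq {d : ℕ} {f : (Fin d → ℝ) → ℝ} (hf : ContDiffOn ℝ 2 f (Orth d))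
    {y : Fin d → ℝ} (hy : y ∈ Orth d) (j : Fin d) :
    partial2 f y j = Pd (Pd f j) j y := by
  have hyj := mem_Orth.1 hy j
  unfold partial2
  have e : deriv (fun u => f (Function.update y j u)) =ᶠ[nhds (y j)]
      fun u => Pd f j (Function.update y j u) := by
    filter_upwards [isOpen_Ioi.mem_nhds hyj] with u hu
    exact (Pd_hasDerivAt (hf.differentiableOn (by norm_num)) hy j hu).deriv
  rw [e.deriv_eq,
    (Pd_hasDerivAt ((Pd_contDiffOn hf j).differentiableOn (by norm_num)) hy j hyj).deriv]
  simp

lemma taylor1 {g g' g'' : ℝ → ℝ} {a t c M : ℝ} (ha : 0 < a) (ht : 0 < t)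
    (h1 : ∀ u > 0, HasDerivAt g (g' u) u) (h2 : ∀ u > 0, HasDerivAt g' (g'' u) u)
    (hM : ∀ u ∈ Set.uIcc a t, |g'' u - c| ≤ M) :
    |g t - g a - g' a * (t - a) - c / 2 * (t - a) ^ 2| ≤ M * (t - a) ^ 2 := by
  have hpos : ∀ u ∈ Set.uIcc a t, 0 < u := fun u hu => lt_of_lt_of_le (lt_min ha ht) hu.1
  have hM0 : 0 ≤ M := (abs_nonneg _).trans (hM a Set.left_mem_uIcc)
  have hconv : Convex ℝ (Set.uIcc a t) := convex_uIcc a t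
  have s1 : ∀ u ∈ Set.uIcc a t, |g' u - g' a - c * (u - a)| ≤ M * |t - a| := by
    intro u hu
    have := hconv.norm_image_sub_le_of_norm_hasDerivWithin_le
      (f := fun u => g' u - c * u) (f' := fun u => g'' u - c) (C := M)
      (fun v hv => ((h2 v (hpos v hv)).sub
        (by simpa using (hasDerivAt_id v).const_mul c)).hasDerivWithinAt)
      (fun v hv => by simpa using hM v hv) Set.left_mem_uIcc hu
    simp only [Real.norm_eq_abs] at this
    have h3 : |u - a| ≤ |t - a| := Set.abs_sub_left_of_mem_uIcc hu
    calc |g' u - g' a - c * (u - a)| = |g' u - c * u - (g' a - c * a)| := by congr 1; ring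
      _ ≤ M * |u - a| := this
      _ ≤ _ := by gcongr
  have := hconv.norm_image_sub_le_of_norm_hasDerivWithin_le
      (f := fun u => g u - g' a * (u - a) - c / 2 * (u - a) ^ 2)
      (f' := fun u => g' u - g' a - c * (u - a)) (C := M * |t - a|)
      (fun v hv => by
        have e1 : HasDerivAt (fun u : ℝ => u - a) 1 v := (hasDerivAt_id v).sub_const a
        have e2 := ((h1 v (hpos v hv)).sub (e1.const_mul (g' a))).sub
          ((e1.pow 2).const_mul (c / 2))
        refine (HasDerivAt.congr_deriv e2 ?_).hasDerivWithinAt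
        simp; ring)
      (fun v hv => by simpa using s1 v hv) Set.left_mem_uIcc Set.right_mem_uIcc
  simp only [Real.norm_eq_abs] at this
  calc _ = |g t - g' a * (t - a) - c / 2 * (t - a) ^ 2 -
        (g a - g' a * (a - a) - c / 2 * (a - a) ^ 2)| := by congr 1; ring
    _ ≤ M * |t - a| * |t - a| := this
    _ = _ := by rw [mul_assoc, abs_mul_abs_self]; ring

lemma taylorO {d : ℕ} {f : (Fin d → ℝ) → ℝ} (hf : ContDiffOn ℝ 2 f (Orth d))
    {y : Fin d → ℝ} (hy : y ∈ Orth d) (j : Fin d) {t c M : ℝ} (ht : 0 < t)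
    (hM : ∀ u ∈ Set.uIcc (y j) t, |Pd (Pd f j) j (Function.update y j u) - c| ≤ M) :
    |f (Function.update y j t) - f y - Pd f j y * (t - y j) - c / 2 * (t - y j) ^ 2|
      ≤ M * (t - y j) ^ 2 := by
  have := taylor1 (g := fun u => f (Function.update y j u))
    (g' := fun u => Pd f j (Function.update y j u))
    (mem_Orth.1 hy j) ht
    (fun u hu => Pd_hasDerivAt (hf.differentiableOn (by norm_num)) hy j hu)
    (fun u hu => Pd_hasDerivAt ((Pd_contDiffOn hf j).differentiableOn (by norm_num)) hy j hu) hM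
  simpa using this

lemma growth1 {d : ℕ} {f : (Fin d → ℝ) → ℝ} (hf : ContDiffOn ℝ 2 f (Orth d)) {C : ℝ}
    (j : Fin d) (hC : ∀ y ∈ Orth d, |Pd (Pd f j) j y| ≤ C)
    {y : Fin d → ℝ} (hy : y ∈ Orth d) {t K1 K2 W : ℝ} (ht : 0 < t) (hW : 1 ≤ W)
    (h1 : |f y| ≤ K1 * W) (h2 : |f (Function.update y j (y j + 1))| ≤ K2 * W) :
    |f (Function.update y j t)| ≤
      (K1 + (K1 + K2 + C) * (1 + y j) + C * (1 + y j ^ 2)) * (W * (1 + t ^ 2)) := by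
  have hyj := mem_Orth.1 hy j
  have hC0 : 0 ≤ C := (abs_nonneg _).trans (hC y hy)
  have hT : ∀ t > 0, |f (Function.update y j t) - f y - Pd f j y * (t - y j)|
      ≤ C * (t - y j) ^ 2 := by
    intro t ht
    have := taylorO hf hy j (t := t) (c := 0) (M := C) ht (fun u hu => by
      rw [sub_zero]
      exact hC _ (update_mem hy j (lt_of_lt_of_le (lt_min hyj ht) hu.1)))
    simpa using this
  have hA := hT (y j + 1) (by linarith)
  have hB := hT t ht
  simp only [add_sub_cancel_left, mul_one, one_pow] at hA
  have hp : |Pd f j y| ≤ (K1 + K2 + C) * W := by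
    rw [abs_le] at *
    constructor <;> nlinarith
  set a := y j
  have hK1 : 0 ≤ K1 := by
    by_contra h
    push Not at h
    nlinarith [abs_nonneg (f y)]
  have hS : 0 ≤ K1 + K2 + C := by
    by_contra h
    push Not at h
    nlinarith [abs_nonneg (Pd f j y)]
  have q1 : |t - a| ≤ (1 + a) * (1 + t ^ 2) := by
    rw [abs_le]
    constructor <;> nlinarith [sq_nonneg (t - 1), mul_pos hyj (pow_pos ht 2)]
  have q2 : (t - a) ^ 2 ≤ (1 + a ^ 2) * (1 + t ^ 2) := by
    nlinarith [mul_pos hyj ht, sq_nonneg (a * t)]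
  have q3 : |Pd f j y * (t - a)| ≤ ((K1 + K2 + C) * W) * ((1 + a) * (1 + t ^ 2)) := by
    rw [abs_mul]
    gcongr
  have q4 : |f (Function.update y j t)| ≤ |f y| + |Pd f j y * (t - a)| + C * (t - a) ^ 2 := by
    have e : f (Function.update y j t) =
      f y + Pd f j y * (t - a) + (f (Function.update y j t) - f y - Pd f j y * (t - a)) := by ring
    calc _ = |f y + Pd f j y * (t - a) +
          (f (Function.update y j t) - f y - Pd f j y * (t - a))| := by rw [← e]
      _ ≤ _ := (abs_add_three _ _ _).trans (by linarith)
  have q5 : C * (t - a) ^ 2 ≤ C * (W * ((1 + a ^ 2) * (1 + t ^ 2))) := by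
    apply mul_le_mul_of_nonneg_left _ hC0
    have : 0 ≤ (1 + a ^ 2) * (1 + t ^ 2) := by positivity
    nlinarith
  have q6 : K1 * W ≤ K1 * (W * (1 + t ^ 2)) := by
    apply mul_le_mul_of_nonneg_left _ hK1
    nlinarith [sq_nonneg t]
  calc _ ≤ K1 * (W * (1 + t ^ 2)) + ((K1 + K2 + C) * W) * ((1 + a) * (1 + t ^ 2)) +
        C * (W * ((1 + a ^ 2) * (1 + t ^ 2))) := by linarith
    _ = _ := by ring

lemma growth {d : ℕ} {f : (Fin d → ℝ) → ℝ} (hf : ContDiffOn ℝ 2 f (Orth d)) {C : ℝ}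
    (hC : ∀ y ∈ Orth d, ∀ j, |Pd (Pd f j) j y| ≤ C) (s : Finset (Fin d)) :
    ∀ y ∈ Orth d, ∃ K : ℝ, ∀ t ∈ Orth d,
      |f (s.piecewise t y)| ≤ K * ∏ i ∈ s, (1 + t i ^ 2) := by
  induction s using Finset.induction_on with
  | empty => intro y hy; exact ⟨|f y|, fun t _ => by simp⟩
  | insert j s hj ih =>
    intro y hy
    have hyj := mem_Orth.1 hy j
    obtain ⟨K1, h1⟩ := ih y hy
    obtain ⟨K2, h2⟩ := ih _ (update_mem hy j (by linarith : 0 < y j + 1))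
    refine ⟨(K1 + (K1 + K2 + C) * (1 + y j) + C * (1 + y j ^ 2)), fun t ht => ?_⟩
    have e0 : s.piecewise t y j = y j := by simp [hj]
    have e2 : s.piecewise t (Function.update y j (y j + 1)) =
        Function.update (s.piecewise t y) j (y j + 1) := by
      funext i
      by_cases h : i = j
      · subst h; simp [hj]
      · by_cases hi : i ∈ s <;> simp [h, hi]
    have := growth1 hf j (fun y hy => hC y hy j) (piecewise_mem hy ht s) (mem_Orth.1 ht j)
      (by
        have := Finset.prod_le_prod (s := s) (f := fun _ => (1 : ℝ)) (g := fun i => 1 + t i ^ 2)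
          (fun i _ => zero_le_one) (fun i _ => by nlinarith [sq_nonneg (t i)])
        simpa using this)
      (h1 t ht) (by rw [e0, ← e2]; exact h2 t ht)
    rw [Finset.piecewise_insert, Finset.prod_insert hj, mul_comm (1 + t j ^ 2)]
    rw [e0] at this
    exact this

lemma ae_Orth {d : ℕ} {ν : Fin d → Measure ℝ} [∀ i, IsProbabilityMeasure (ν i)]
    (hpos : ∀ i, ∀ᵐ t ∂(ν i), 0 < t) : ∀ᵐ t ∂(Measure.pi ν), t ∈ Orth d := by
  simp_rw [mem_Orth]
  rw [ae_all_iff]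
  intro i
  exact (measurePreserving_eval ν i).quasiMeasurePreserving.ae (hpos i)

lemma aesm_piecewise {d : ℕ} {ν : Fin d → Measure ℝ} [∀ i, IsProbabilityMeasure (ν i)]
    (hpos : ∀ i, ∀ᵐ t ∂(ν i), 0 < t) {F : (Fin d → ℝ) → ℝ} (hF : ContinuousOn F (Orth d))
    {y : Fin d → ℝ} (hy : y ∈ Orth d) (s : Finset (Fin d)) :
    AEStronglyMeasurable (fun t => F (s.piecewise t y)) (Measure.pi ν) := by
  have hc : Continuous fun t : Fin d → ℝ => s.piecewise t y := by
    apply continuous_pi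
    intro i
    by_cases h : i ∈ s
    · simpa [h] using continuous_apply i
    · simpa [h] using continuous_const
  have h1 : ContinuousOn (fun t => F (s.piecewise t y)) (Orth d) :=
    hF.comp hc.continuousOn (fun t ht => piecewise_mem hy ht s)
  have h2 := h1.aestronglyMeasurable (μ := Measure.pi ν) (isOpen_Orth d).measurableSet
  rwa [Measure.restrict_eq_self_of_ae_mem (ae_Orth hpos)] at h2

lemma integrable_piecewise {d : ℕ} {ν : Fin d → Measure ℝ} [∀ i, IsProbabilityMeasure (ν i)]
    (hpos : ∀ i, ∀ᵐ t ∂(ν i), 0 < t) (hmom : ∀ i, Integrable (fun t : ℝ => t ^ 2) (ν i))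
    {f : (Fin d → ℝ) → ℝ} (hf : ContDiffOn ℝ 2 f (Orth d)) {C : ℝ}
    (hC : ∀ y ∈ Orth d, ∀ j, |Pd (Pd f j) j y| ≤ C)
    {y : Fin d → ℝ} (hy : y ∈ Orth d) (s : Finset (Fin d)) :
    Integrable (fun t => f (s.piecewise t y)) (Measure.pi ν) := by
  obtain ⟨K, hK⟩ := growth hf hC s y hy
  have hi : Integrable (fun t : Fin d → ℝ => ∏ i, (if i ∈ s then 1 + t i ^ 2 else 1))
      (Measure.pi ν) := by
    apply Integrable.fintype_prod (f := fun i (u : ℝ) => if i ∈ s then 1 + u ^ 2 else 1)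
    intro i
    by_cases h : i ∈ s
    · simp only [h, if_true]; exact (integrable_const _).add (hmom i)
    · simp [h]
  refine (hi.const_mul K).mono' (aesm_piecewise hpos hf.continuousOn hy s) ?_
  filter_upwards [ae_Orth hpos] with t ht
  have := hK t ht
  rwa [Finset.prod_ite_mem, Finset.univ_inter]

lemma resample {d : ℕ} (ν : Fin d → Measure ℝ) [∀ i, IsProbabilityMeasure (ν i)] (j : Fin d) :
    ((Measure.pi ν).prod (ν j)).map (fun p => Function.update p.1 j p.2) = Measure.pi ν := by
  have hm : Measurable fun p : (Fin d → ℝ) × ℝ => Function.update p.1 j p.2 := by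
    rw [measurable_pi_iff]
    intro i
    by_cases h : i = j
    · subst h; simpa using measurable_snd
    · simp only [ne_eq, h, not_false_eq_true, Function.update_of_ne]; fun_prop
  symm
  apply Measure.pi_eq
  intro S hS
  rw [Measure.map_apply hm (MeasurableSet.univ_pi hS)]
  have e : (fun p : (Fin d → ℝ) × ℝ => Function.update p.1 j p.2) ⁻¹' (Set.univ.pi S) =
      (Set.univ.pi (Function.update S j Set.univ)) ×ˢ S j := by
    ext p
    simp only [Set.mem_preimage, Set.mem_univ_pi, Set.mem_prod]
    constructor
    · intro h
      refine ⟨fun i => ?_, by simpa using h j⟩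
      by_cases hi : i = j
      · subst hi; simp
      · simpa [hi] using h i
    · rintro ⟨h1, h2⟩ i
      by_cases hi : i = j
      · subst hi; simpa using h2
      · simpa [hi] using h1 i
  rw [e, Measure.prod_prod, Measure.pi_pi, ← Finset.mul_prod_erase univ _ (mem_univ j),
    ← Finset.mul_prod_erase univ (fun i => ν i (S i)) (mem_univ j)]
  simp only [Function.update_self, measure_univ, one_mul]
  rw [mul_comm]
  congr 1
  apply Finset.prod_congr rfl
  intro i hi
  rw [Function.update_of_ne (Finset.ne_of_mem_erase hi)]

lemma measurable_coord_sub {d : ℕ} (j : Fin d) (a : ℝ) :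
    Measurable fun t : Fin d → ℝ => t j - a := by
  fun_prop

lemma linear_zero {d : ℕ} {ν : Fin d → Measure ℝ} [∀ i, IsProbabilityMeasure (ν i)]
    {φ : (Fin d → ℝ) → ℝ} (j : Fin d) {a : ℝ}
    (hφ : AEStronglyMeasurable φ (Measure.pi ν))
    (hj : ∀ t u, φ (Function.update t j u) = φ t)
    (hmean : ∫ t, (t - a) ∂(ν j) = 0) :
    ∫ t, φ t * (t j - a) ∂(Measure.pi ν) = 0 := by
  have hm : Measurable fun p : (Fin d → ℝ) × ℝ => Function.update p.1 j p.2 := by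
    rw [measurable_pi_iff]
    intro i
    by_cases h : i = j
    · subst h; simpa using measurable_snd
    · simp only [ne_eq, h, not_false_eq_true, Function.update_of_ne]; fun_prop
  have h2 : AEStronglyMeasurable (fun t : Fin d → ℝ => φ t * (t j - a)) (Measure.pi ν) :=
    hφ.mul (measurable_coord_sub j a).aestronglyMeasurable
  rw [← resample ν j] at h2
  rw [← resample ν j, integral_map hm.aemeasurable h2]
  simp only [hj, Function.update_self]
  rw [integral_prod_mul (f := φ) (g := fun u : ℝ => u - a), hmean, mul_zero]

lemma step {d : ℕ} {f : (Fin d → ℝ) → ℝ} (hf : ContDiffOn ℝ 2 f (Orth d)) {C : ℝ}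
    (hC : ∀ y ∈ Orth d, ∀ j, |Pd (Pd f j) j y| ≤ C)
    {x : Fin d → ℝ} (hx : x ∈ Orth d) {K : ℝ} (hK : 0 ≤ K)
    {s : Finset (Fin d)} {j : Fin d} (hj : j ∉ s) (ε : ℝ) (hε : 0 < ε) :
    ∃ δ > (0 : ℝ), ∀ (b : Fin d → ℝ) (ν : Fin d → Measure ℝ),
      (∀ i, 0 < b i) → (∀ i, b i < δ) → (∀ i, Nice (ν i) (x i) (b i) K) →
      |∫ t, f ((insert j s).piecewise t x) ∂(Measure.pi ν)
        - ∫ t, f (s.piecewise t x) ∂(Measure.pi ν)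
        - (1 / 2) * (x j * b j * Pd (Pd f j) j x)| ≤ ε * ∑ i, b i := by
  have hxj := mem_Orth.1 hx j
  have hC0 : 0 ≤ C := (abs_nonneg _).trans (hC x hx j)
  have hcont := Pd_continuousOn (Pd_contDiffOn hf j) j
  set Q := Pd (Pd f j) j with hQ
  obtain ⟨ε1, hε1, hε1'⟩ : ∃ ε1 > 0, ε1 * x j ≤ ε / 2 :=
    ⟨ε / (2 * x j), by positivity, by apply le_of_eq; field_simp⟩
  obtain ⟨η, hη, hηQ⟩ : ∃ η > 0, ∀ z, dist z x < η → |Q z - Q x| < ε1 := by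
    have := Metric.continuousAt_iff.1 (hcont.continuousAt ((isOpen_Orth d).mem_nhds hx)) ε1 hε1
    obtain ⟨η, hη, h⟩ := this
    exact ⟨η, hη, fun z hz => by simpa [Real.dist_eq] using h hz⟩
  set L := C / η ^ 2 with hL
  have hL0 : 0 ≤ L := by positivity
  set Λ := L * (K * (1 + d)) with hΛ
  have hΛ0 : 0 ≤ Λ := by positivity
  refine ⟨ε / (2 * (Λ + 1)), by positivity, fun b ν hb hbδ hν => ?_⟩
  have hprob : ∀ i, IsProbabilityMeasure (ν i) := fun i => (hν i).prob
  have hpos : ∀ i, ∀ᵐ t ∂(ν i), 0 < t := fun i => (hν i).pos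
  have hmom2 : ∀ i, Integrable (fun t : ℝ => t ^ 2) (ν i) := fun i => (hν i).mom 2
  have hcm : ∀ i (a : ℝ), Integrable (fun t : ℝ => (t - a) ^ 2) (ν i) := by
    intro i a
    have : (fun t : ℝ => (t - a) ^ 2) = fun t => t ^ 2 + ((-2 * a) * t ^ 1 + a ^ 2) := by
      funext t; ring
    rw [this]
    exact ((hν i).mom 2).add ((((hν i).mom 1).const_mul _).add (integrable_const _))
  have hcm4 : ∀ i (a : ℝ), Integrable (fun t : ℝ => (t - a) ^ 4) (ν i) := by
    intro i a
    have : (fun t : ℝ => (t - a) ^ 4) = fun t => t ^ 4 + ((-4 * a) * t ^ 3 +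
        ((6 * a ^ 2) * t ^ 2 + ((-4 * a ^ 3) * t ^ 1 + a ^ 4))) := by
      funext t; ring
    rw [this]
    exact ((hν i).mom 4).add ((((hν i).mom 3).const_mul _).add ((((hν i).mom 2).const_mul _).add
      ((((hν i).mom 1).const_mul _).add (integrable_const _))))
  set ρ := Measure.pi ν with hρ
  have hq : Integrable (fun t : Fin d → ℝ => (t j - x j) ^ 2) ρ :=
    integrable_comp_eval (μ := ν) (i := j) (hcm j (x j))
  have hq4 : ∀ i, Integrable (fun t : Fin d → ℝ => (t i - x i) ^ 4) ρ := fun i =>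
    integrable_comp_eval (μ := ν) (i := i) (hcm4 i (x i))
  have iq : ∫ t : Fin d → ℝ, (t j - x j) ^ 2 ∂ρ = x j * b j := by
    rw [← (hν j).var]
    exact integral_comp_eval (μ := ν) (i := j) (hcm j (x j)).aestronglyMeasurable
  have iq4 : ∀ i, ∫ t : Fin d → ℝ, (t i - x i) ^ 4 ∂ρ ≤ K * b i ^ 2 := fun i => by
    refine le_trans (le_of_eq ?_) (hν i).four
    exact integral_comp_eval (μ := ν) (i := i) (hcm4 i (x i)).aestronglyMeasurable
  -- the remainder bound
  set R : (Fin d → ℝ) → ℝ := fun t => ε1 * (t j - x j) ^ 2 +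
    L * ∑ i, ((t i - x i) ^ 4 + (t j - x j) ^ 4) with hR
  have hS : Integrable (fun t : Fin d → ℝ => ∑ i, ((t i - x i) ^ 4 + (t j - x j) ^ 4)) ρ :=
    integrable_finsetSum _ fun i _ => (hq4 i).add (hq4 j)
  have hRi : Integrable R ρ := (hq.const_mul _).add (hS.const_mul _)
  have hRint : ∫ t, R t ∂ρ ≤ ε * ∑ i, b i := by
    have hS' : ∀ i, Integrable (fun t : Fin d → ℝ => (t i - x i) ^ 4 + (t j - x j) ^ 4) ρ :=
      fun i => (hq4 i).add (hq4 j)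
    have e1 : ∫ t, R t ∂ρ = ε1 * (x j * b j) + L * ∑ i, (∫ t, (t i - x i) ^ 4 ∂ρ +
        ∫ t, (t j - x j) ^ 4 ∂ρ) := by
      rw [hR, integral_add (hq.const_mul _) (hS.const_mul _), integral_const_mul,
        integral_const_mul, iq, integral_finsetSum _ (fun i _ => hS' i)]
      congr 2
      exact Finset.sum_congr rfl fun i _ => integral_add (hq4 i) (hq4 j)
    have hbS : b j ≤ ∑ i, b i := Finset.single_le_sum (fun i _ => (hb i).le) (mem_univ j)
    have hS0 : 0 < ∑ i, b i := (hb j).trans_le hbS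
    set δ := ε / (2 * (Λ + 1)) with hδ
    have hδ0 : 0 < δ := by positivity
    have e2 : ∑ i, (∫ t, (t i - x i) ^ 4 ∂ρ + ∫ t, (t j - x j) ^ 4 ∂ρ) ≤
        (K * (1 + d)) * (δ * ∑ i, b i) := by
      have hsq : ∀ i, b i ^ 2 ≤ δ * b i := fun i => by
        nlinarith [hb i, hbδ i]
      calc _ ≤ ∑ i, (K * (δ * b i) + K * (δ * ∑ i, b i)) := by
            apply Finset.sum_le_sum
            intro i _
            apply add_le_add
            · exact (iq4 i).trans (mul_le_mul_of_nonneg_left (hsq i) hK)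
            · refine (iq4 j).trans (mul_le_mul_of_nonneg_left ((hsq j).trans ?_) hK)
              gcongr
        _ = _ := by
            rw [Finset.sum_add_distrib, Finset.sum_const, Finset.card_univ, Fintype.card_fin,
              ← Finset.mul_sum, ← Finset.mul_sum, nsmul_eq_mul]
            ring
    have e3 : Λ * δ ≤ ε / 2 := by
      rw [hδ, mul_div_assoc', div_le_div_iff₀ (by positivity) (by positivity)]
      nlinarith
    rw [e1]
    calc _ ≤ ε1 * (x j * b j) + L * ((K * (1 + d)) * (δ * ∑ i, b i)) := by gcongr
      _ = (ε1 * x j) * b j + (Λ * δ) * ∑ i, b i := by rw [hΛ]; ring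
      _ ≤ (ε / 2) * (∑ i, b i) + (ε / 2) * ∑ i, b i := by
          apply add_le_add
          · exact mul_le_mul hε1' hbS (hb j).le (by positivity)
          · exact mul_le_mul_of_nonneg_right e3 hS0.le
      _ = _ := by ring
  -- the remainder
  set φ : (Fin d → ℝ) → ℝ := fun t => Pd f j (s.piecewise t x) with hφ
  have hφm : AEStronglyMeasurable φ ρ :=
    aesm_piecewise hpos (Pd_contDiffOn hf j).continuousOn hx s
  have hφj : ∀ t u, φ (Function.update t j u) = φ t := by
    intro t u
    simp only [hφ]
    congr 1
    funext i
    by_cases hi : i ∈ s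
    · have : i ≠ j := fun h => hj (h ▸ hi)
      simp [hi, this]
    · simp [hi]
  have h0 : ∫ t, φ t * (t j - x j) ∂ρ = 0 := linear_zero j hφm hφj (hν j).mean
  have hI1 := integrable_piecewise hpos hmom2 hf hC hx (insert j s)
  have hI2 := integrable_piecewise hpos hmom2 hf hC hx s
  set E : (Fin d → ℝ) → ℝ := fun t => f ((insert j s).piecewise t x) - f (s.piecewise t x)
    - φ t * (t j - x j) - Q x / 2 * (t j - x j) ^ 2 with hE
  have hEm : AEStronglyMeasurable E ρ := by
    refine ((hI1.sub hI2).aestronglyMeasurable.sub (hφm.mul ?_)).sub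
      (hq.const_mul _).aestronglyMeasurable
    exact (measurable_coord_sub j _).aestronglyMeasurable
  have hER : ∀ᵐ t ∂ρ, ‖E t‖ ≤ R t := by
    filter_upwards [ae_Orth hpos] with t ht
    have hy := piecewise_mem hx ht s
    have htj := mem_Orth.1 ht j
    have e0 : s.piecewise t x j = x j := by simp [hj]
    set M := ε1 + 2 * L * ∑ i, (t i - x i) ^ 2 with hMdef
    have hsum0 : 0 ≤ ∑ i, (t i - x i) ^ 2 := Finset.sum_nonneg fun i _ => sq_nonneg _
    have hM : ∀ u ∈ Set.uIcc (s.piecewise t x j) (t j),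
        |Q (Function.update (s.piecewise t x) j u) - Q x| ≤ M := by
      intro u hu
      have hu0 : 0 < u := by
        rw [e0] at hu
        exact lt_of_lt_of_le (lt_min hxj htj) hu.1
      by_cases hclose : ∀ i, |t i - x i| < η
      · have : dist (Function.update (s.piecewise t x) j u) x < η := by
          rw [dist_pi_lt_iff hη]
          intro i
          rw [Real.dist_eq]
          by_cases hi : i = j
          · subst hi
            rw [Function.update_self]
            rw [e0] at hu
            exact (Set.abs_sub_left_of_mem_uIcc hu).trans_lt (hclose i)
          · rw [Function.update_of_ne hi]
            by_cases his : i ∈ s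
            · simpa [his] using hclose i
            · simpa [his] using hη
        have h1 := hηQ _ this
        have : 0 ≤ 2 * L * ∑ i, (t i - x i) ^ 2 := by positivity
        linarith
      · push Not at hclose
        obtain ⟨i, hi⟩ := hclose
        have h1 : |Q (Function.update (s.piecewise t x) j u) - Q x| ≤ 2 * C := by
          refine (abs_sub _ _).trans ?_
          have := hC _ (update_mem hy j hu0) j
          have := hC x hx j
          linarith
        have h2 : η ^ 2 ≤ ∑ i, (t i - x i) ^ 2 := by
          calc η ^ 2 ≤ |t i - x i| ^ 2 := by gcongr
            _ = (t i - x i) ^ 2 := sq_abs _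
            _ ≤ _ := Finset.single_le_sum (f := fun i => (t i - x i) ^ 2)
                (fun i _ => sq_nonneg _) (mem_univ i)
        have h3 : C = L * η ^ 2 := by rw [hL]; field_simp
        have h4 : L * η ^ 2 ≤ L * ∑ i, (t i - x i) ^ 2 := by gcongr
        rw [hMdef]
        linarith
    have hT := taylorO hf hy j htj hM
    rw [← Finset.piecewise_insert, e0] at hT
    rw [Real.norm_eq_abs]
    refine hT.trans ?_
    rw [hMdef, hR]
    have : 2 * (∑ i, (t i - x i) ^ 2) * (t j - x j) ^ 2 ≤
        ∑ i, ((t i - x i) ^ 4 + (t j - x j) ^ 4) := by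
      rw [Finset.mul_sum, Finset.sum_mul]
      apply Finset.sum_le_sum
      intro i _
      nlinarith [sq_nonneg ((t i - x i) ^ 2 - (t j - x j) ^ 2)]
    have := mul_le_mul_of_nonneg_left this hL0
    simp only
    linarith
  have hEi : Integrable E ρ := hRi.mono' hEm hER
  have hlin : Integrable (fun t => φ t * (t j - x j)) ρ := by
    have := ((hI1.sub hI2).sub hEi).sub (hq.const_mul (Q x / 2))
    refine this.congr (ae_of_all _ fun t => ?_)
    simp only [hE, Pi.sub_apply]
    ring
  have hEint : ∫ t, E t ∂ρ = ∫ t, f ((insert j s).piecewise t x) ∂ρ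
        - ∫ t, f (s.piecewise t x) ∂ρ - (1 / 2) * (x j * b j * Q x) := by
    have j1 : Integrable (fun t => f ((insert j s).piecewise t x) - f (s.piecewise t x)) ρ :=
      hI1.sub hI2
    have j2 : Integrable (fun t => f ((insert j s).piecewise t x) - f (s.piecewise t x)
      - φ t * (t j - x j)) ρ := j1.sub hlin
    rw [hE, integral_sub j2 (hq.const_mul _), integral_sub j1 hlin, integral_sub hI1 hI2, h0,
      integral_const_mul, iq]
    ring
  rw [← hEint]
  exact (norm_integral_le_of_norm_le hRi hER).trans hRint

lemma all_steps {d : ℕ} {f : (Fin d → ℝ) → ℝ} (hf : ContDiffOn ℝ 2 f (Orth d)) {C : ℝ}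
    (hC : ∀ y ∈ Orth d, ∀ j, |Pd (Pd f j) j y| ≤ C)
    {x : Fin d → ℝ} (hx : x ∈ Orth d) {K : ℝ} (hK : 0 ≤ K) (s : Finset (Fin d)) :
    ∀ ε > (0 : ℝ), ∃ δ > (0 : ℝ), ∀ (b : Fin d → ℝ) (ν : Fin d → Measure ℝ),
      (∀ i, 0 < b i) → (∀ i, b i < δ) → (∀ i, Nice (ν i) (x i) (b i) K) →
      |∫ t, f (s.piecewise t x) ∂(Measure.pi ν) - f x
        - (1 / 2) * ∑ j ∈ s, (x j * b j * Pd (Pd f j) j x)| ≤ ε * ∑ i, b i := by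
  induction s using Finset.induction_on with
  | empty =>
    intro ε hε
    refine ⟨1, one_pos, fun b ν hb _ hν => ?_⟩
    have hprob : ∀ i, IsProbabilityMeasure (ν i) := fun i => (hν i).prob
    have : 0 ≤ ε * ∑ i, b i := mul_nonneg hε.le (Finset.sum_nonneg fun i _ => (hb i).le)
    simpa using this
  | insert j s hj ih =>
    intro ε hε
    obtain ⟨δ1, hδ1, h1⟩ := ih (ε / 2) (by positivity)
    obtain ⟨δ2, hδ2, h2⟩ := step hf hC hx hK hj (ε / 2) (by positivity)
    refine ⟨min δ1 δ2, lt_min hδ1 hδ2, fun b ν hb hbδ hν => ?_⟩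
    have a1 := h1 b ν hb (fun i => (hbδ i).trans_le (min_le_left _ _)) hν
    have a2 := h2 b ν hb (fun i => (hbδ i).trans_le (min_le_right _ _)) hν
    rw [Finset.sum_insert hj]
    rw [abs_le] at *
    constructor <;> linarith [a1.1, a1.2, a2.1, a2.2]

theorem multivariate_gamma_bias_expansion {d : ℕ}
    (f : (Fin d → ℝ) → ℝ) (x : Fin d → ℝ) (hx : ∀ j, 0 < x j)
    (hf : ContDiffOn ℝ 2 f (Set.univ.pi fun _ => Set.Ioi 0))
    (hbdd : ∃ C : ℝ, ∀ y ∈ Set.univ.pi fun _ : Fin d => Set.Ioi (0 : ℝ),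
      ∀ j, |partial2 f y j| ≤ C) :
    ∀ ε > (0 : ℝ), ∃ δ > (0 : ℝ), ∀ b : Fin d → ℝ,
      (∀ j, 0 < b j) → (∀ j, b j < δ) →
      |(∫ t : Fin d → ℝ, f t *
          ∏ j, Set.indicator (Set.Ioi 0) (gammaKernel (x j) (b j)) (t j))
        - f x - (1 / 2) * ∑ j, x j * b j * partial2 f x j|
        ≤ ε * ∑ j, b j := by
  have hf' : ContDiffOn ℝ 2 f (Orth d) := hf
  have hx' : x ∈ Orth d := mem_Orth.2 hx
  obtain ⟨C, hC⟩ := hbdd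
  have hC' : ∀ y ∈ Orth d, ∀ j, |Pd (Pd f j) j y| ≤ C := fun y hy j => by
    rw [← partial2_eq hf' hy j]
    exact hC y hy j
  have hKi : ∀ i, 0 ≤ 3 * x i ^ 2 + 6 * x i := fun i => by
    have := hx i
    positivity
  intro ε hε
  obtain ⟨δ, hδ, h⟩ := all_steps hf' hC' hx' (K := ∑ i, (3 * x i ^ 2 + 6 * x i))
    (Finset.sum_nonneg fun i _ => hKi i) univ ε hε
  refine ⟨min δ 1, lt_min hδ one_pos, fun b hb hbδ => ?_⟩
  have := h b (fun i => gm (x i) (b i)) hb (fun i => (hbδ i).trans_le (min_le_left _ _))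
    (fun i => by
      have hn := gm_nice (hx i) (hb i) ((hbδ i).trans_le (min_le_right _ _))
      refine ⟨hn.prob, hn.pos, hn.mom, hn.mean, hn.var, hn.four.trans ?_⟩
      apply mul_le_mul_of_nonneg_right _ (sq_nonneg _)
      exact Finset.single_le_sum (f := fun i => 3 * x i ^ 2 + 6 * x i) (fun i _ => hKi i)
        (mem_univ i))
  simp only [Finset.piecewise_univ] at this
  rw [← pi_gm x b hx hb f] at this
  have e : ∀ j, partial2 f x j = Pd (Pd f j) j x := fun j => partial2_eq hf' hx' j
  simp only [e]
  exact this
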